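/- Every forcing condition p = (F_p, T_p, d_p) can be extended to a forcing condition q = (F_q, T_q, d_q) such that every string in F_p has at least two incomparable extensions in F_q. -/

import Mathlib

open MeasureTheory

/-- The first `n` bits of `x ∈ 2^ω`, as a string. -/
def seg (x : ℕ → Bool) (n : ℕ) : List Bool := List.ofFn (fun i : Fin n => x i)

/-- The cylinder of a string: all `x ∈ 2^ω` with `σ` as a prefix. -/
def cyl (σ : List Bool) : Set (ℕ → Bool) := {x | seg x σ.length = σ}

/-- A tree: a set of strings closed under prefixes. -/
def IsTree (T : Set (List Bool)) : Prop :=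
  ∀ σ ∈ T, ∀ τ : List Bool, τ <+: σ → τ ∈ T

/-- The paths of a tree: those `x ∈ 2^ω` all of whose prefixes are in `T`. -/
def paths (T : Set (List Bool)) : Set (ℕ → Bool) := {x | ∀ n, seg x n ∈ T}

/-- Relative measure: `μ_τ(A) = 2^{|τ|} · μ(A ∩ ⟦τ⟧)`. -/
noncomputable def relMeasure (μ : Measure (ℕ → Bool)) (τ : List Bool)
    (A : Set (ℕ → Bool)) : ℝ :=
  2 ^ τ.length * (μ (A ∩ cyl τ)).toReal

/-- A tree is strongly positive if `μ_σ([T]) > 0` for every `σ ∈ T`. -/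
def StronglyPositive (μ : Measure (ℕ → Bool)) (T : Set (List Bool)) : Prop :=
  ∀ σ ∈ T, 0 < relMeasure μ σ (paths T)

/-- A lower density function: a nonnegative rational-valued function on a
finite nonempty domain of strings of equal length. -/
structure LDF where
  dom : Finset (List Bool)
  val : List Bool → ℚ
  dom_nonempty : dom.Nonempty
  nonneg : ∀ σ ∈ dom, 0 ≤ val σ
  eq_length : ∀ σ ∈ dom, ∀ τ ∈ dom, σ.length = τ.length

/-- `e` extends `d`: every element of `⟨e⟩` extends an element of `⟨d⟩`,
every element of `⟨d⟩` has an extension in `⟨e⟩`, and for each `σ ∈ ⟨d⟩`,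
`d(σ)·2^{-|σ|} ≤ Σ_{τ ∈ ⟨e⟩, σ ⊑ τ} e(τ)·2^{-|τ|}`. -/
def LDF.Extends (e d : LDF) : Prop :=
  (∀ τ ∈ e.dom, ∃ σ ∈ d.dom, σ <+: τ) ∧
  (∀ σ ∈ d.dom, ∃ τ ∈ e.dom, σ <+: τ) ∧
  ∀ σ ∈ d.dom, d.val σ * (2 : ℚ)⁻¹ ^ σ.length ≤
    ∑ τ ∈ e.dom.filter (fun τ => σ <+: τ), e.val τ * (2 : ℚ)⁻¹ ^ τ.length

/-- A tree `T` is `d`-dense: `⟨d⟩` is the full level of `T` at the common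
length of `⟨d⟩`, and for some rational `ε > 0`, `d(σ) + ε ≤ μ_σ([T])` for
each `σ ∈ ⟨d⟩`. -/
def LDF.DenseIn (d : LDF) (μ : Measure (ℕ → Bool)) (T : Set (List Bool)) : Prop :=
  ∃ ε : ℚ, 0 < ε ∧ (∃ l : ℕ, ∀ σ : List Bool, σ ∈ d.dom ↔ (σ ∈ T ∧ σ.length = l)) ∧
    ∀ σ ∈ d.dom, (d.val σ : ℝ) + (ε : ℝ) ≤ relMeasure μ σ (paths T)

/-- A forcing condition `(F_p, T_p, d_p)`: a lower density function `d`
(whose domain is `F`), together with an infinite, `d`-dense, strongly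
positive tree `T`. -/
structure Cond (μ : Measure (ℕ → Bool)) where
  d : LDF
  T : Set (List Bool)
  tree : IsTree T
  infinite : T.Infinite
  dense : d.DenseIn μ T
  strongPos : StronglyPositive μ T

/-- `q` extends `p`: `d_q` extends `d_p` and `T_q ⊆ T_p`. -/
def Cond.Extends {μ : Measure (ℕ → Bool)} (q p : Cond μ) : Prop :=
  q.d.Extends p.d ∧ q.T ⊆ p.T

theorem seg_length (x : ℕ → Bool) (n : ℕ) : (seg x n).length = n := by
  simp [seg]

theorem seg_prefix (x : ℕ → Bool) {m n : ℕ} (h : m ≤ n) : seg x m <+: seg x n := by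
  rw [List.prefix_iff_eq_take]
  apply List.ext_getElem
  · simp [seg, h]
  · intro i h1 h2
    simp [seg]

theorem sub_aux (μ : Measure (ℕ → Bool))
    (hμ : ∀ σ : List Bool, μ (cyl σ) = (2 : ENNReal)⁻¹ ^ σ.length)
    (T : Set (List Bool)) (m : ℕ) (D : Finset (List Bool))
    (hD : ∀ σ, σ ∈ D ↔ (σ ∈ T ∧ σ.length = m)) (σ : List Bool) (h : σ.length ≤ m) :
    (μ (paths T ∩ cyl σ)).toReal ≤
      ∑ τ ∈ D.filter (fun τ => σ <+: τ), (μ (paths T ∩ cyl τ)).toReal := by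
  have hfin : ∀ τ, μ (paths T ∩ cyl τ) ≠ ⊤ := by
    intro τ
    refine ne_top_of_le_ne_top ?_ (measure_mono Set.inter_subset_right)
    rw [hμ]
    exact ENNReal.pow_ne_top (by simp)
  rw [← ENNReal.toReal_sum (fun τ _ => hfin τ)]
  refine ENNReal.toReal_mono (ENNReal.sum_ne_top.2 (fun τ _ => hfin τ)) ?_
  refine le_trans (measure_mono ?_) (measure_biUnion_finset_le _ _)
  rintro x ⟨hx, hxs⟩
  simp only [Set.mem_iUnion]
  refine ⟨seg x m, ?_, hx, ?_⟩
  · rw [Finset.mem_filter, hD]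
    refine ⟨⟨hx m, seg_length x m⟩, ?_⟩
    have h2 := seg_prefix x h
    have h3 : seg x σ.length = σ := hxs
    rwa [h3] at h2
  · show seg x (seg x m).length = _
    rw [seg_length]

theorem level_exists {ι : Type*} (s : Finset ι) (f : ι → ℝ) (hf : ∀ i ∈ s, 0 < f i) (l : ℕ) :
    ∃ m, l ≤ m ∧ ∀ i ∈ s, (2 : ℝ)⁻¹ ^ m < f i := by
  have h : ∀ᶠ m : ℕ in Filter.atTop, ∀ i ∈ s, (2 : ℝ)⁻¹ ^ m < f i := by
    rw [Filter.eventually_all_finset]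
    intro i hi
    exact (tendsto_pow_atTop_nhds_zero_of_lt_one (by norm_num) (by norm_num)).eventually_lt_const
      (hf i hi)
  obtain ⟨m, h1, h2⟩ := ((Filter.eventually_ge_atTop l).and h).exists
  exact ⟨m, h1, h2⟩

theorem eps_exists {ι : Type*} (s : Finset ι) (f : ι → ℝ) (hf : ∀ i ∈ s, 0 < f i) :
    ∃ ε : ℚ, 0 < ε ∧ ∀ i ∈ s, (ε : ℝ) < f i := by
  obtain ⟨m, -, h⟩ := level_exists s f hf 0
  refine ⟨(2 : ℚ)⁻¹ ^ m, by positivity, fun i hi => ?_⟩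
  push_cast
  exact h i hi

/-- **Branching.**
Every forcing condition `p = (F_p, T_p, d_p)` can be extended to a condition
`q = (F_q, T_q, d_q)` such that every string in `F_p` has at least two
incomparable extensions in `F_q`.
(`μ` is the fair-coin measure, characterized by its values on cylinders.) -/
theorem branching (μ : Measure (ℕ → Bool))
    (hμ : ∀ σ : List Bool, μ (cyl σ) = (2 : ENNReal)⁻¹ ^ σ.length)
    (p : Cond μ) :
    ∃ q : Cond μ, q.Extends p ∧
      ∀ σ ∈ p.d.dom, ∃ τ₁ ∈ q.d.dom, ∃ τ₂ ∈ q.d.dom,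
        σ <+: τ₁ ∧ σ <+: τ₂ ∧ ¬ τ₁ <+: τ₂ ∧ ¬ τ₂ <+: τ₁ := by
  classical
  obtain ⟨ε, hε, ⟨l, hl⟩, hd⟩ := p.dense
  have hpos : ∀ σ ∈ p.T, 0 < (μ (paths p.T ∩ cyl σ)).toReal := by
    intro σ hσ
    exact (pos_iff_pos_of_mul_pos (p.strongPos σ hσ)).1 (by positivity)
  obtain ⟨m, hlm, hm⟩ := level_exists p.d.dom (fun σ => (μ (paths p.T ∩ cyl σ)).toReal)
    (fun σ hσ => hpos σ ((hl σ).1 hσ).1) l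
  have hfinD : {σ : List Bool | σ ∈ p.T ∧ σ.length = m}.Finite :=
    (List.finite_length_eq Bool m).subset (fun σ h => h.2)
  obtain ⟨D, hD⟩ : ∃ D : Finset (List Bool), ∀ σ, σ ∈ D ↔ (σ ∈ p.T ∧ σ.length = m) :=
    ⟨hfinD.toFinset, by simp⟩
  have hsub := sub_aux μ hμ p.T m D hD
  have hlen : ∀ σ ∈ p.d.dom, σ.length ≤ m := fun σ hσ => by
    rw [((hl σ).1 hσ).2]; exact hlm
  have hbr : ∀ σ ∈ p.d.dom, ∃ τ₁ ∈ D, ∃ τ₂ ∈ D,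
        σ <+: τ₁ ∧ σ <+: τ₂ ∧ ¬ τ₁ <+: τ₂ ∧ ¬ τ₂ <+: τ₁ := by
    intro σ hσ
    have h1 : 1 < (D.filter (fun τ => σ <+: τ)).card := by
      by_contra hc
      push Not at hc
      have h2 : ∑ τ ∈ D.filter (fun τ => σ <+: τ), (μ (paths p.T ∩ cyl τ)).toReal
          ≤ (D.filter (fun τ => σ <+: τ)).card • (2 : ℝ)⁻¹ ^ m := by
        apply Finset.sum_le_card_nsmul
        intro τ hτ
        have hτm := ((hD τ).1 (Finset.mem_filter.1 hτ).1).2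
        have h3 : μ (paths p.T ∩ cyl τ) ≤ (2 : ENNReal)⁻¹ ^ m := by
          rw [← hτm, ← hμ]
          exact measure_mono Set.inter_subset_right
        have := ENNReal.toReal_mono (ENNReal.pow_ne_top (by simp)) h3
        simpa using this
      have h4 : ((D.filter (fun τ => σ <+: τ)).card : ℝ) ≤ 1 := by exact_mod_cast hc
      have h5 := hsub σ (hlen σ hσ)
      have h6 := hm σ hσ
      rw [nsmul_eq_mul] at h2
      have h7 : (0 : ℝ) < (2 : ℝ)⁻¹ ^ m := by positivity
      have h8 : (2 : ℝ)⁻¹ ^ m < (μ (paths p.T ∩ cyl σ)).toReal := h6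
      nlinarith
    obtain ⟨a, ha, b, hb, hab⟩ := Finset.one_lt_card.1 h1
    rw [Finset.mem_filter] at ha hb
    have hla := ((hD a).1 ha.1).2
    have hlb := ((hD b).1 hb.1).2
    refine ⟨a, ha.1, b, hb.1, ha.2, hb.2, fun h => hab ?_, fun h => hab ?_⟩
    · exact h.eq_of_length (hla.trans hlb.symm)
    · exact (h.eq_of_length (hlb.trans hla.symm)).symm
  have hN : (0 : ℝ) < (D.card : ℝ) + 1 := by positivity
  have hεR : (0 : ℝ) < ε := by exact_mod_cast hε
  have hchoice : ∀ τ, ∃ v : ℚ, τ ∈ D → (0 ≤ v ∧ (v : ℝ) < relMeasure μ τ (paths p.T) ∧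
      relMeasure μ τ (paths p.T) - ε / ((D.card : ℝ) + 1) < v) := by
    intro τ
    by_cases hτ : τ ∈ D
    · have h0 := p.strongPos τ ((hD τ).1 hτ).1
      have : max 0 (relMeasure μ τ (paths p.T) - ε / ((D.card : ℝ) + 1))
          < relMeasure μ τ (paths p.T) := by
        apply max_lt h0
        have : 0 < (ε : ℝ) / ((D.card : ℝ) + 1) := by positivity
        linarith
      obtain ⟨v, hv1, hv2⟩ := exists_rat_btwn this
      rw [max_lt_iff] at hv1
      refine ⟨v, fun _ => ⟨?_, hv2, hv1.2⟩⟩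
      exact_mod_cast hv1.1.le
    · exact ⟨0, fun h => absurd h hτ⟩
  choose v hv using hchoice
  obtain ⟨ε', hε', hε'2⟩ := eps_exists D (fun τ => relMeasure μ τ (paths p.T) - v τ)
    (fun τ hτ => sub_pos.2 (hv τ hτ).2.1)
  have hDne : D.Nonempty := by
    obtain ⟨σ, hσ⟩ := p.d.dom_nonempty
    obtain ⟨τ, hτ, -⟩ := hbr σ hσ
    exact ⟨τ, hτ⟩
  let e : LDF := ⟨D, v, hDne, fun τ hτ => (hv τ hτ).1,
    fun a ha b hb => (((hD a).1 ha).2).trans (((hD b).1 hb).2).symm⟩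
  have hdense : e.DenseIn μ p.T := by
    refine ⟨ε', hε', ⟨m, hD⟩, fun τ hτ => ?_⟩
    have := hε'2 τ hτ
    show (v τ : ℝ) + ε' ≤ _
    linarith
  refine ⟨⟨e, p.T, p.tree, p.infinite, hdense, p.strongPos⟩, ⟨⟨?_, ?_, ?_⟩, subset_rfl⟩, hbr⟩
  · intro τ hτ
    have h1 := (hD τ).1 hτ
    refine ⟨τ.take l, (hl _).2 ⟨p.tree τ h1.1 _ (List.take_prefix _ _), ?_⟩, List.take_prefix _ _⟩
    rw [List.length_take, h1.2]
    exact min_eq_left hlm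
  · intro σ hσ
    obtain ⟨τ, hτ, -, -, h, -⟩ := hbr σ hσ
    exact ⟨τ, hτ, h⟩
  · intro σ hσ
    show p.d.val σ * (2 : ℚ)⁻¹ ^ σ.length ≤
      ∑ τ ∈ D.filter (fun τ => σ <+: τ), v τ * (2 : ℚ)⁻¹ ^ τ.length
    rw [← Rat.cast_le (K := ℝ)]
    push_cast
    set S := D.filter (fun τ => σ <+: τ) with hS
    have h1 := hsub σ (hlen σ hσ)
    have h2 := hd σ hσ
    unfold relMeasure at h2
    have hσl := ((hl σ).1 hσ).2
    rw [hσl] at h2 ⊢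
    have h3 : ∀ τ ∈ S, (μ (paths p.T ∩ cyl τ)).toReal
        - ε / ((D.card : ℝ) + 1) * (2 : ℝ)⁻¹ ^ m ≤ v τ * (2 : ℝ)⁻¹ ^ τ.length := by
      intro τ hτ
      have hτD := (Finset.mem_filter.1 hτ).1
      have hτm := ((hD τ).1 hτD).2
      have h4 := (hv τ hτD).2.2
      unfold relMeasure at h4
      rw [hτm] at h4 ⊢
      have h5 : (2 : ℝ) ^ m * (2 : ℝ)⁻¹ ^ m = 1 := by rw [← mul_pow]; norm_num
      have h6 := mul_le_mul_of_nonneg_right h4.le (show (0 : ℝ) ≤ (2 : ℝ)⁻¹ ^ m by positivity)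
      calc _ = (2 ^ m * (μ (paths p.T ∩ cyl τ)).toReal - ε / ((D.card : ℝ) + 1))
            * (2 : ℝ)⁻¹ ^ m := by linear_combination (-(μ (paths p.T ∩ cyl τ)).toReal) * h5
        _ ≤ _ := h6
    have h7 := Finset.sum_le_sum h3
    rw [Finset.sum_sub_distrib, Finset.sum_const, nsmul_eq_mul] at h7
    have h8 : (S.card : ℝ) * (ε / ((D.card : ℝ) + 1) * (2 : ℝ)⁻¹ ^ m) ≤ ε * (2 : ℝ)⁻¹ ^ l := by
      have ha : (S.card : ℝ) ≤ (D.card : ℝ) + 1 := by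
        have : S.card ≤ D.card := Finset.card_filter_le _ _
        have : (S.card : ℝ) ≤ D.card := by exact_mod_cast this
        linarith
      have hb : (2 : ℝ)⁻¹ ^ m ≤ (2 : ℝ)⁻¹ ^ l :=
        pow_le_pow_of_le_one (by norm_num) (by norm_num) hlm
      calc (S.card : ℝ) * (ε / ((D.card : ℝ) + 1) * (2 : ℝ)⁻¹ ^ m)
          ≤ ((D.card : ℝ) + 1) * (ε / ((D.card : ℝ) + 1) * (2 : ℝ)⁻¹ ^ l) := by gcongr
        _ = ε * (2 : ℝ)⁻¹ ^ l := by field_simp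
    have h9 : (2 : ℝ) ^ l * (2 : ℝ)⁻¹ ^ l = 1 := by rw [← mul_pow]; norm_num
    have h10 := mul_le_mul_of_nonneg_right h2 (show (0 : ℝ) ≤ (2 : ℝ)⁻¹ ^ l by positivity)
    have h11 : 2 ^ l * (μ (paths p.T ∩ cyl σ)).toReal * (2 : ℝ)⁻¹ ^ l
        = (μ (paths p.T ∩ cyl σ)).toReal := by
      linear_combination (μ (paths p.T ∩ cyl σ)).toReal * h9
    linarith
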